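/- arXiv:1508.01454 — 2 statements merged into one kernel-verified Lean document; each statement's English description precedes it below -/
import Mathlib

section
/- In an exact potential game with finite strategy sets, every improvement path is finite: there is no infinite sequence of strategy profiles s⁰, s¹, s², … such that for every n there exist a player i and a strategy x with sⁿ⁺¹ = Function.update sⁿ i x and θ i (sⁿ⁺¹) > θ i (sⁿ). -/
section PotentialGames

variable {ι : Type*} [DecidableEq ι] {S : ι → Type*} {α β : Type*}

/-- One step of an improvement path: the profile `t` arises from `s` by a unilateral deviation of
some player that strictly increases this player's own payoff. -/
def IsImprovement [Preorder α] (θ : ι → (∀ j, S j) → α) (s t : ∀ j, S j) : Prop :=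
  ∃ (i : ι) (x : S i), t = Function.update s i x ∧ θ i s < θ i t

/-- `P` is an exact potential of the game with payoffs `θ`: a unilateral deviation changes the
potential by the same amount as the payoff of the deviating player. -/
def IsExactPotential [Sub α] (θ : ι → (∀ j, S j) → α) (P : (∀ j, S j) → α) : Prop :=
  ∀ (i : ι) (s : ∀ j, S j) (x : S i),
    θ i (Function.update s i x) - θ i s = P (Function.update s i x) - P s

/-- `P` is a generalized ordinal potential, in the sense of Monderer and Shapley, of the game with
payoffs `θ`: a unilateral deviation that is profitable for the deviating player increases `P`. No
converse is required, and payoffs and potential may take values in different orders. -/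
def IsGeneralizedOrdinalPotential [Preorder α] [Preorder β]
    (θ : ι → (∀ j, S j) → α) (P : (∀ j, S j) → β) : Prop :=
  ∀ (i : ι) (s : ∀ j, S j) (x : S i),
    θ i s < θ i (Function.update s i x) → P s < P (Function.update s i x)

theorem IsExactPotential.isGeneralizedOrdinalPotential
    [AddGroup α] [Preorder α] [AddRightStrictMono α]
    {θ : ι → (∀ j, S j) → α} {P : (∀ j, S j) → α} (hP : IsExactPotential θ P) :
    IsGeneralizedOrdinalPotential θ P := by
  intro i s x hθ
  rw [← sub_pos, ← hP i s x]
  exact sub_pos.2 hθ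

namespace IsGeneralizedOrdinalPotential

variable [Preorder α] [Preorder β] {θ : ι → (∀ j, S j) → α} {P : (∀ j, S j) → β}

theorem lt_of_isImprovement (hP : IsGeneralizedOrdinalPotential θ P) {s t : ∀ j, S j}
    (hst : IsImprovement θ s t) : P s < P t := by
  obtain ⟨i, x, rfl, hθ⟩ := hst
  exact hP i s x hθ

theorem wellFounded_isImprovement [WellFoundedGT (Set.range P)]
    (hP : IsGeneralizedOrdinalPotential θ P) :
    WellFounded fun t s => IsImprovement θ s t :=
  Subrelation.wf (fun hst => hP.lt_of_isImprovement hst)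
    (InvImage.wf (Set.rangeFactorization P) wellFounded_gt)

end IsGeneralizedOrdinalPotential

theorem stmt_3_general [Preorder α] [Preorder β] {θ : ι → (∀ j, S j) → α} {P : (∀ j, S j) → β}
    [WellFoundedGT (Set.range P)] (hP : IsGeneralizedOrdinalPotential θ P) :
    ¬ ∃ s : ℕ → ∀ j, S j, ∀ n : ℕ, IsImprovement θ (s n) (s (n + 1)) := by
  rintro ⟨s, hs⟩
  exact (wellFounded_iff_isEmpty_descending_chain.1 hP.wellFounded_isImprovement).false ⟨s, hs⟩

end PotentialGames

/-- In an exact potential game with finite strategy sets, every improvement path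
is finite: there is no infinite sequence of single-player strictly improving
unilateral deviations. -/
theorem stmt_3 {ι : Type*} [Fintype ι] [DecidableEq ι] {S : ι → Type*}
    [∀ i, Fintype (S i)] [∀ i, Nonempty (S i)]
    (θ : ι → (∀ j, S j) → ℝ) (P : (∀ j, S j) → ℝ)
    (hpot : ∀ (i : ι) (s : ∀ j, S j) (x : S i),
      θ i (Function.update s i x) - θ i s = P (Function.update s i x) - P s) :
    ¬ ∃ s : ℕ → ∀ j, S j, ∀ n : ℕ, ∃ (i : ι) (x : S i),
        s (n + 1) = Function.update (s n) i x ∧ θ i (s (n + 1)) > θ i (s n) := by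
  have hP : IsExactPotential θ P := hpot
  exact stmt_3_general hP.isGeneralizedOrdinalPotential
end

section
/- Let I be a finite set of players that are pairwise non-interacting, meaning that for all distinct k, k' ∈ I there is no local term index j with both k ∈ A j and k' ∈ A j. If the profile s' agrees with s on all players outside I, then the change in the global objective decomposes as the sum of the individual local-profit changes: P s' - P s = Σ_{k ∈ I} (θ k (Function.update s k (s' k)) - θ k s). In particular, if every k ∈ I strictly improves its local profit by its own unilateral deviation (θ k (Function.update s k (s' k)) > θ k s), then the simultaneous update strictly increases the global objective: P s' > P s. -/
/-!
Updating a single player `k` changes only the terms with `k ∈ A j`, so `k`'s local profit and the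
global objective change by the same amount: the objective is an exact potential. It therefore
suffices to show that the global changes caused by the players of `I` add up, which holds term by
term since each `f j` sees at most one player of `I`.
-/

section SingleTerm

variable {ι : Type*} [DecidableEq ι] {S : ι → Type*} {a : Set ι}

theorem apply_update_eq_of_dependsOn_of_notMem {β : Type*} {g : (∀ i, S i) → β}
    (hg : DependsOn g a) {k : ι} (hk : k ∉ a) (s : ∀ i, S i) (x : S k) :
    g (Function.update s k x) = g s :=
  hg fun _ hi => Function.update_of_ne (ne_of_mem_of_not_mem hi hk) x s

theorem sub_eq_sum_update_sub_of_dependsOn {M : Type*} [AddCommGroup M] {g : (∀ i, S i) → M}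
    (hg : DependsOn g a) {I : Finset ι} (hI : (a ∩ I).Subsingleton) {s s' : ∀ i, S i}
    (hagree : ∀ i ∉ I, s' i = s i) :
    g s' - g s = ∑ k ∈ I, (g (Function.update s k (s' k)) - g s) := by
  have zero_of_notMem (k : ι) (hk : k ∉ a) : g (Function.update s k (s' k)) - g s = 0 :=
    sub_eq_zero.mpr (apply_update_eq_of_dependsOn_of_notMem hg hk s (s' k))
  by_cases hmeet : ∃ k ∈ I, k ∈ a
  · obtain ⟨k, hkI, hka⟩ := hmeet
    have eq_update : g s' = g (Function.update s k (s' k)) := by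
      refine hg fun i hi => ?_
      obtain rfl | hik := eq_or_ne i k
      · rw [Function.update_self]
      · rw [Function.update_of_ne hik]
        exact hagree i fun hiI => hik (hI ⟨hi, hiI⟩ ⟨hka, hkI⟩)
    rw [eq_update]
    exact (Finset.sum_eq_single_of_mem k hkI fun l hlI hlk =>
      zero_of_notMem l fun hla => hlk (hI ⟨hla, hlI⟩ ⟨hka, hkI⟩)).symm
  · push Not at hmeet
    have eq_self : g s' = g s := hg fun i hi => hagree i fun hiI => hmeet i hiI hi
    rw [eq_self, sub_self]
    exact (Finset.sum_eq_zero fun k hk => zero_of_notMem k (hmeet k hk)).symm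

end SingleTerm

section Game

variable {ι J M : Type*} {S : ι → Type*}

/-- Players in `I` are pairwise non-interacting when no local term involves two of them; `A j` is
the set of players involved in the `j`-th term. -/
def PairwiseNonInteracting (A : J → Set ι) (I : Set ι) : Prop :=
  I.Pairwise fun k k' => ∀ j, ¬(k ∈ A j ∧ k' ∈ A j)

theorem PairwiseNonInteracting.subsingleton_inter {A : J → Set ι} {I : Set ι}
    (hI : PairwiseNonInteracting A I) (j : J) : (A j ∩ I).Subsingleton :=
  fun _ hk _ hk' => by_contra fun hne => hI hk.2 hk'.2 hne j ⟨hk.1, hk'.1⟩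

variable [Fintype J] [AddCommGroup M]

/-- The global objective `P` of the game with local terms `f`. -/
def globalObjective (f : J → (∀ i, S i) → M) (s : ∀ i, S i) : M :=
  ∑ j, f j s

/-- The local profit `θ i` of player `i`: the total of the local terms involving `i`. -/
def localProfit (A : J → Set ι) [∀ i j, Decidable (i ∈ A j)] (f : J → (∀ i, S i) → M) (i : ι)
    (s : ∀ i, S i) : M :=
  ∑ j with i ∈ A j, f j s

variable [DecidableEq ι] {A : J → Set ι} {f : J → (∀ i, S i) → M}

theorem localProfit_update_sub [∀ i j, Decidable (i ∈ A j)] (hf : ∀ j, DependsOn (f j) (A j))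
    (s : ∀ i, S i) (k : ι) (x : S k) :
    localProfit A f k (Function.update s k x) - localProfit A f k s =
      globalObjective f (Function.update s k x) - globalObjective f s := by
  simp only [localProfit, globalObjective, ← Finset.sum_sub_distrib]
  refine Finset.sum_subset (Finset.filter_subset _ _) fun j _ hj => sub_eq_zero.mpr ?_
  have hk : k ∉ A j := by simpa using hj
  exact apply_update_eq_of_dependsOn_of_notMem (hf j) hk s x

theorem globalObjective_sub_eq_sum_update_sub (hf : ∀ j, DependsOn (f j) (A j)) {I : Finset ι}
    (hI : PairwiseNonInteracting A I) {s s' : ∀ i, S i} (hagree : ∀ i ∉ I, s' i = s i) :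
    globalObjective f s' - globalObjective f s =
      ∑ k ∈ I, (globalObjective f (Function.update s k (s' k)) - globalObjective f s) := by
  simp only [globalObjective, ← Finset.sum_sub_distrib]
  rw [Finset.sum_comm]
  exact Finset.sum_congr rfl fun j _ =>
    sub_eq_sum_update_sub_of_dependsOn (hf j) (hI.subsingleton_inter j) hagree

theorem globalObjective_sub_eq_sum_localProfit_sub [∀ i j, Decidable (i ∈ A j)]
    (hf : ∀ j, DependsOn (f j) (A j)) {I : Finset ι} (hI : PairwiseNonInteracting A I)
    {s s' : ∀ i, S i} (hagree : ∀ i ∉ I, s' i = s i) :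
    globalObjective f s' - globalObjective f s =
      ∑ k ∈ I, (localProfit A f k (Function.update s k (s' k)) - localProfit A f k s) := by
  simp only [localProfit_update_sub hf]
  exact globalObjective_sub_eq_sum_update_sub hf hI hagree

end Game

theorem stmt_9_general {ι J M : Type*} [Fintype J] [DecidableEq ι]
    [AddCommGroup M] [PartialOrder M] [IsOrderedAddMonoid M]
    {S : ι → Type*} (A : J → Set ι) [∀ i j, Decidable (i ∈ A j)]
    (f : J → (∀ i, S i) → M) (hf : ∀ j, DependsOn (f j) (A j))
    (I : Finset ι) (hI : PairwiseNonInteracting A I)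
    (s s' : ∀ i, S i) (hagree : ∀ i ∉ I, s' i = s i) :
    globalObjective f s' - globalObjective f s =
        ∑ k ∈ I, (localProfit A f k (Function.update s k (s' k)) - localProfit A f k s) ∧
      (I.Nonempty →
        (∀ k ∈ I, localProfit A f k (Function.update s k (s' k)) > localProfit A f k s) →
        globalObjective f s' > globalObjective f s) := by
  have hsum := globalObjective_sub_eq_sum_localProfit_sub hf hI hagree
  refine ⟨hsum, fun hne himp => sub_pos.mp ?_⟩
  rw [hsum]
  exact Finset.sum_pos (fun k hk => sub_pos.mpr (himp k hk)) hne

/-- For a set `I` of pairwise non-interacting players, the change in the global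
objective under a simultaneous update of the players in `I` decomposes as the
sum of individual local-profit changes; in particular, if every player of the
nonempty set `I` strictly improves by its own unilateral deviation, then the
simultaneous update strictly increases the global objective. -/
theorem stmt_9 {ι J : Type*} [Fintype ι] [Fintype J] [DecidableEq ι]
    {S : ι → Type*} (A : J → Set ι) [∀ (i : ι) (j : J), Decidable (i ∈ A j)]
    (f : J → (∀ i, S i) → ℝ)
    (hdep : ∀ (j : J) (s s' : ∀ i, S i), (∀ i ∈ A j, s i = s' i) → f j s = f j s')
    (P : (∀ i, S i) → ℝ) (θ : ι → (∀ i, S i) → ℝ)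
    (hP : ∀ s : ∀ i, S i, P s = ∑ j : J, f j s)
    (hθ : ∀ (i : ι) (s : ∀ i, S i),
      θ i s = ∑ j ∈ Finset.univ.filter (fun j : J => i ∈ A j), f j s)
    (I : Finset ι)
    (hpair : ∀ k ∈ I, ∀ k' ∈ I, k ≠ k' → ∀ j : J, ¬(k ∈ A j ∧ k' ∈ A j))
    (s s' : ∀ i, S i) (hagree : ∀ i : ι, i ∉ I → s' i = s i) :
    P s' - P s = ∑ k ∈ I, (θ k (Function.update s k (s' k)) - θ k s) ∧
      (I.Nonempty → (∀ k ∈ I, θ k (Function.update s k (s' k)) > θ k s) →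
        P s' > P s) := by
  obtain ⟨rfl, rfl⟩ : P = globalObjective f ∧ θ = localProfit A f :=
    ⟨funext hP, funext fun i => funext (hθ i)⟩
  exact stmt_9_general A f hdep I (fun k hk k' hk' => hpair k hk k' hk') s s' hagree
end
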